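/- Let ω be a nonzero real number, suppose iω is an eigenvalue of P with geometric multiplicity p ≥ 1, and let W ∈ ℂ^{n×m} have rank m with m < p. Then for every t > 0, both iω and −iω are eigenvalues of the damped polynomial P̂ₜ(λ) := P(λ) + λ·t·WW*. -/

import Mathlib

open Matrix ComplexOrder

/-!
Rank is subadditive, so adding a matrix of rank `r` lowers the dimension of the kernel by at most
`r`, and the damping term, of rank at most `m < p`, leaves a nontrivial kernel at `iω`. The damped
polynomial still has Hermitian coefficients, so its value at `z̄` is the conjugate transpose of its
value at `z`; the eigenvalues are therefore closed under conjugation, and the conjugate of `iω` is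
`-iω`.
-/

section Nullity

variable {𝕜 m n : Type*} [Field 𝕜] [Fintype n]

theorem rank_add_le_rank_add_rank [Finite m] (A B : Matrix m n 𝕜) :
    (A + B).rank ≤ A.rank + B.rank := by
  have hrange : LinearMap.range (A + B).mulVecLin ≤
      LinearMap.range A.mulVecLin ⊔ LinearMap.range B.mulVecLin := by
    rw [mulVecLin_add]
    exact LinearMap.range_add_le _ _
  exact (Submodule.finrank_mono hrange).trans (Submodule.finrank_add_le_finrank_add_finrank _ _)

theorem rank_add_finrank_ker_mulVecLin (A : Matrix m n 𝕜) :
    A.rank + Module.finrank 𝕜 (LinearMap.ker A.mulVecLin) = Fintype.card n := by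
  rw [Matrix.rank, LinearMap.finrank_range_add_finrank_ker, Module.finrank_fintype_fun_eq_card]

theorem det_add_eq_zero_of_rank_lt_finrank_ker [DecidableEq n] {A B : Matrix n n 𝕜}
    (h : B.rank < Module.finrank 𝕜 (LinearMap.ker A.mulVecLin)) : (A + B).det = 0 := by
  by_contra hdet
  have hfull : (A + B).rank = Fintype.card n := rank_of_det_ne_zero hdet
  have hsum := rank_add_le_rank_add_rank A B
  have hA := rank_add_finrank_ker_mulVecLin A
  lia

end Nullity

section QuadraticPencil

variable {𝕜 n : Type*}

/-- The quadratic matrix polynomial `λ²M + λD + K`, encoded as the function of `λ` it defines. The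
damped polynomial `P̂ₜ` is the pencil with `D + tWW*` in place of `D`. -/
def quadraticPencil [Semiring 𝕜] (M D K : Matrix n n 𝕜) (z : 𝕜) : Matrix n n 𝕜 :=
  z ^ 2 • M + z • D + K

theorem quadraticPencil_add_damping [Semiring 𝕜] (M D E K : Matrix n n 𝕜) (z : 𝕜) :
    quadraticPencil M (D + E) K z = quadraticPencil M D K z + z • E := by
  simp only [quadraticPencil, smul_add]
  abel

theorem conjTranspose_quadraticPencil [CommSemiring 𝕜] [StarRing 𝕜] {M D K : Matrix n n 𝕜}
    (hM : M.IsHermitian) (hD : D.IsHermitian) (hK : K.IsHermitian) (z : 𝕜) :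
    (quadraticPencil M D K z)ᴴ = quadraticPencil M D K (star z) := by
  simp only [quadraticPencil, conjTranspose_add, conjTranspose_smul, star_pow, hM.eq, hD.eq, hK.eq]

theorem det_quadraticPencil_star [CommRing 𝕜] [StarRing 𝕜] [Fintype n] [DecidableEq n]
    {M D K : Matrix n n 𝕜} (hM : M.IsHermitian) (hD : D.IsHermitian) (hK : K.IsHermitian) (z : 𝕜) :
    (quadraticPencil M D K (star z)).det = star (quadraticPencil M D K z).det := by
  rw [← conjTranspose_quadraticPencil hM hD hK, det_conjTranspose]

end QuadraticPencil

theorem stmt15_general {𝕜 m n : Type*} [Field 𝕜] [StarRing 𝕜] [Fintype m] [Fintype n]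
    [DecidableEq n] {M D K : Matrix n n 𝕜}
    (hM : M.IsHermitian) (hD : D.IsHermitian) (hK : K.IsHermitian) {W : Matrix n m 𝕜} {z : 𝕜}
    (hW : W.rank < Module.finrank 𝕜 (LinearMap.ker (quadraticPencil M D K z).mulVecLin))
    {t : 𝕜} (ht : IsSelfAdjoint t) :
    (quadraticPencil M (D + t • (W * Wᴴ)) K z).det = 0 ∧
      (quadraticPencil M (D + t • (W * Wᴴ)) K (star z)).det = 0 := by
  have hDt : (D + t • (W * Wᴴ)).IsHermitian :=
    hD.add ((isHermitian_mul_conjTranspose_self W).smul ht)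
  have hrank : (z • t • (W * Wᴴ)).rank ≤ W.rank := by
    rw [smul_smul, ← Matrix.mul_smul]
    exact rank_mul_le_left W _
  have hdet : (quadraticPencil M (D + t • (W * Wᴴ)) K z).det = 0 := by
    rw [quadraticPencil_add_damping]
    exact det_add_eq_zero_of_rank_lt_finrank_ker (hrank.trans_lt hW)
  exact ⟨hdet, by rw [det_quadraticPencil_star hM hDt hK, hdet, star_zero]⟩

/-- If `iω` is an eigenvalue of `P` with geometric multiplicity `p ≥ 1` and `W` has rank
`m < p`, then for every `t > 0` both `iω` and `−iω` remain eigenvalues of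
`P̂ₜ(λ) = P(λ) + λ t W W*`. -/
theorem stmt15 {n p m : ℕ}
    (M D K : Matrix (Fin n) (Fin n) ℂ)
    (hM : M.PosDef) (hD : D.PosSemidef) (hK : K.PosSemidef)
    (P : ℂ → Matrix (Fin n) (Fin n) ℂ)
    (hP : ∀ z : ℂ, P z = z ^ 2 • M + z • D + K)
    (ω : ℝ) (hω : ω ≠ 0) (hp : 1 ≤ p)
    (hgeo : Module.finrank ℂ
      (LinearMap.ker (P ((ω : ℂ) * Complex.I)).mulVecLin) = p)
    (W : Matrix (Fin n) (Fin m) ℂ) (hW : W.rank = m) (hmp : m < p)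
    (Ph : ℝ → ℂ → Matrix (Fin n) (Fin n) ℂ)
    (hPh : ∀ (t : ℝ) (z : ℂ), Ph t z = P z + (z * (t : ℂ)) • (W * Wᴴ)) :
    ∀ t : ℝ, 0 < t →
      (Ph t ((ω : ℂ) * Complex.I)).det = 0 ∧
      (Ph t (-((ω : ℂ) * Complex.I))).det = 0 := by
  intro t _
  obtain rfl : P = quadraticPencil M D K := funext hP
  simpa [hPh, quadraticPencil_add_damping, mul_smul] using
    stmt15_general hM.isHermitian hD.isHermitian hK.isHermitian
      (hW.trans_lt (hmp.trans_eq hgeo.symm)) (Complex.conj_ofReal t)
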